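/- arXiv:1204.2124 — 2 statements merged into one kernel-verified Lean document; each statement's English description precedes it below -/
import Mathlib

section
/- Let A = {a_1, …, a_n} be an (m,B)-positive multiset of integers. Set p_i = a_i + B for i = 1, …, n and q = 4B. Let G be the disjoint union of complete graphs K_{p_1} + K_{p_2} + … + K_{p_n} and let H be the disjoint union of m copies of the complete graph K_q. Then A has a 3-partition if and only if there exists a surjective homomorphism from G to H. -/
/-- The disjoint union of an indexed family of graphs, on the sigma type. -/
def disjointUnionGraph {ι : Type*} {F : ι → Type*} (Gs : ∀ i, SimpleGraph (F i)) :
    SimpleGraph (Σ i, F i) :=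
  SimpleGraph.fromRel
    (fun x y => ∃ (i : ι) (u v : F i), (Gs i).Adj u v ∧ x = ⟨i, u⟩ ∧ y = ⟨i, v⟩)

/-- `a : Fin n → ℕ` (an `(m,B)`-positive multiset, given via the hypotheses `n = 3m`,
`∑ aᵢ = mB`, `aᵢ > 0`) has a 3-partition: the index set splits into `m` classes, each of
size 3 and with elements summing to `B`. -/
def HasThreePartition (n m B : ℕ) (a : Fin n → ℕ) : Prop :=
  ∃ part : Fin n → Fin m, ∀ j : Fin m,
    (Finset.univ.filter (fun i => part i = j)).card = 3 ∧
    ∑ i ∈ Finset.univ.filter (fun i => part i = j), a i = B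

/-!
Both graphs have `4mB` vertices, so a surjective homomorphism is bijective. Since the vertices of
a clique are pairwise adjacent, it sends each clique `K_{aᵢ + B}` into a single `K_{4B}`, and the
cliques sent into a given `K_{4B}` fill it exactly. As every `aᵢ` is positive, at most three of
them fit; as there are `3m` of them, each `K_{4B}` receives exactly three, whose `aᵢ` then sum
to `B`. Conversely, the three cliques of a class have `4B` vertices in total, and any bijection
from them onto the vertices of a `K_{4B}` is a homomorphism. The argument works verbatim with `k`
in place of `3` and `k + 1` in place of `4`.
-/

open Finset Function

section Cliques

variable {ι κ : Type*} {F : ι → Type*} {E : κ → Type*}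

theorem disjointUnionGraph_top_adj {x y : Σ i, F i} :
    (disjointUnionGraph fun i => (⊤ : SimpleGraph (F i))).Adj x y ↔ x ≠ y ∧ x.1 = y.1 := by
  rw [disjointUnionGraph, SimpleGraph.fromRel_adj]
  refine and_congr_right fun hne => ⟨?_, fun h => ?_⟩
  · rintro (⟨i, u, v, -, rfl, rfl⟩ | ⟨i, u, v, -, rfl, rfl⟩) <;> rfl
  · obtain ⟨i, u⟩ := x
    obtain ⟨_, v⟩ := y
    obtain rfl := h
    exact Or.inl ⟨i, u, v, fun huv => hne (congrArg _ huv), rfl, rfl⟩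

theorem fst_hom_eq_of_fst_eq
    (f : disjointUnionGraph (fun i => (⊤ : SimpleGraph (F i))) →g
      disjointUnionGraph (fun j => (⊤ : SimpleGraph (E j))))
    {x y : Σ i, F i} (h : x.1 = y.1) : (f x).1 = (f y).1 := by
  by_cases hxy : x = y
  · rw [hxy]
  · exact (disjointUnionGraph_top_adj.1 (f.map_adj (disjointUnionGraph_top_adj.2 ⟨hxy, h⟩))).2

theorem exists_bijective_hom_iff_exists_fiber_equiv [∀ i, Nonempty (F i)] :
    (∃ f : disjointUnionGraph (fun i => (⊤ : SimpleGraph (F i))) →g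
        disjointUnionGraph (fun j => (⊤ : SimpleGraph (E j))), Bijective f) ↔
      ∃ part : ι → κ, ∀ j, Nonempty ((Σ i : {i // part i = j}, F i) ≃ E j) := by
  constructor
  · rintro ⟨f, hf⟩
    let part (i : ι) : κ := (f ⟨i, Classical.arbitrary (F i)⟩).1
    have fst_apply (x : Σ i, F i) : part x.1 = (f x).1 := fst_hom_eq_of_fst_eq f rfl
    refine ⟨part, fun j => ⟨?_⟩⟩
    calc (Σ i : {i // part i = j}, F i)
        ≃ {x : Σ i, F i // part x.1 = j} := (Equiv.subtypeSigmaEquiv F (part · = j)).symm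
      _ ≃ {y : Σ j, E j // y.1 = j} :=
          (Equiv.ofBijective f hf).subtypeEquiv fun x => by
            rw [fst_apply, Equiv.ofBijective_apply]
      _ ≃ E j := Equiv.sigmaSubtype j
  · rintro ⟨part, hpart⟩
    let e : (Σ i, F i) ≃ Σ j, E j :=
      (Equiv.sigmaFiberEquiv fun x : Σ i, F i => part x.1).symm.trans <|
        Equiv.sigmaCongrRight fun j =>
          (Equiv.subtypeSigmaEquiv F (part · = j)).trans (hpart j).some
    have fst_apply (x : Σ i, F i) : (e x).1 = part x.1 := rfl
    refine ⟨⟨e, fun {x y} hxy => ?_⟩, e.bijective⟩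
    obtain ⟨hne, hfst⟩ := disjointUnionGraph_top_adj.1 hxy
    exact disjointUnionGraph_top_adj.2
      ⟨e.injective.ne hne, by rw [fst_apply, fst_apply, hfst]⟩

theorem exists_bijective_hom_iff_exists_sum_fiber_eq [Fintype ι] [DecidableEq κ]
    {p : ι → ℕ} {q : κ → ℕ} (hp : ∀ i, 0 < p i) :
    (∃ f : disjointUnionGraph (fun i => (⊤ : SimpleGraph (Fin (p i)))) →g
        disjointUnionGraph (fun j => (⊤ : SimpleGraph (Fin (q j)))), Bijective f) ↔
      ∃ part : ι → κ, ∀ j, ∑ i with part i = j, p i = q j := by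
  have (i : ι) : Nonempty (Fin (p i)) := ⟨⟨0, hp i⟩⟩
  rw [exists_bijective_hom_iff_exists_fiber_equiv]
  refine exists_congr fun part => forall_congr' fun j => ?_
  rw [← Fintype.card_eq, Fintype.card_sigma, Fintype.card_fin, ← sum_subtype_eq_sum_filter,
    subtype_univ]
  simp only [Fintype.card_fin]

end Cliques

section EqualSums

variable {ι κ : Type*} {a : ι → ℕ} {k B : ℕ}

theorem card_le_of_sum_add_le {s : Finset ι} (hpos : ∀ i ∈ s, 0 < a i)
    (h : ∑ i ∈ s, (a i + B) ≤ (k + 1) * B) : #s ≤ k := by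
  rw [sum_add_distrib, sum_const, smul_eq_mul] at h
  by_contra! hlt
  have hsum : 0 < ∑ i ∈ s, a i := sum_pos hpos (card_pos.1 (by omega))
  have hmul : (k + 1) * B ≤ #s * B := Nat.mul_le_mul_right B hlt
  omega

variable [Fintype ι] [Fintype κ] [DecidableEq κ]

theorem card_fiber_eq_of_card_fiber_le {part : ι → κ}
    (hcard : Fintype.card ι = k * Fintype.card κ) (hle : ∀ j, #{i | part i = j} ≤ k) (j : κ) :
    #{i | part i = j} = k := by
  have htotal : ∑ j, #{i | part i = j} = ∑ _j : κ, k := by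
    rw [← card_eq_sum_card_fiberwise fun i _ => mem_coe.2 (mem_univ (part i)), card_univ, hcard,
      sum_const, card_univ, smul_eq_mul, mul_comm]
  exact (sum_eq_sum_iff_of_le fun j _ => hle j).1 htotal j (mem_univ j)

theorem forall_sum_fiber_add_eq_iff {part : ι → κ}
    (hcard : Fintype.card ι = k * Fintype.card κ) (hpos : ∀ i, 0 < a i) :
    (∀ j, ∑ i with part i = j, (a i + B) = (k + 1) * B) ↔
      ∀ j, #{i | part i = j} = k ∧ ∑ i with part i = j, a i = B := by
  have sum_eq_iff {j : κ} (hj : #{i | part i = j} = k) :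
      ∑ i with part i = j, (a i + B) = (k + 1) * B ↔ ∑ i with part i = j, a i = B := by
    rw [sum_add_distrib, sum_const, hj, smul_eq_mul, add_mul, one_mul, add_comm,
      Nat.add_left_cancel_iff]
  refine ⟨fun h j => ?_, fun h j => (sum_eq_iff (h j).1).2 (h j).2⟩
  have hj : #{i | part i = j} = k :=
    card_fiber_eq_of_card_fiber_le hcard
      (fun j => card_le_of_sum_add_le (fun i _ => hpos i) (h j).le) j
  exact ⟨hj, (sum_eq_iff hj).1 (h j)⟩

theorem threePartition_iff_surjective_hom_unions_of_complete_graphs_general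
    (hcard : Fintype.card ι = k * Fintype.card κ) (hsum : ∑ i, a i = Fintype.card κ * B)
    (hpos : ∀ i, 0 < a i) :
    (∃ part : ι → κ, ∀ j, #{i | part i = j} = k ∧ ∑ i with part i = j, a i = B) ↔
      ∃ f : disjointUnionGraph (fun i => (⊤ : SimpleGraph (Fin (a i + B)))) →g
            disjointUnionGraph (fun _ : κ => (⊤ : SimpleGraph (Fin ((k + 1) * B)))),
        Surjective f := by
  have hvertices : Fintype.card (Σ i, Fin (a i + B)) =
      Fintype.card (Σ _ : κ, Fin ((k + 1) * B)) := by
    simp only [Fintype.card_sigma, Fintype.card_fin, sum_add_distrib, hsum, sum_const, card_univ,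
      hcard, smul_eq_mul]
    ring
  calc (∃ part : ι → κ, ∀ j, #{i | part i = j} = k ∧ ∑ i with part i = j, a i = B)
      ↔ ∃ part : ι → κ, ∀ j, ∑ i with part i = j, (a i + B) = (k + 1) * B :=
        exists_congr fun _ => (forall_sum_fiber_add_eq_iff hcard hpos).symm
    _ ↔ ∃ f : disjointUnionGraph (fun i => (⊤ : SimpleGraph (Fin (a i + B)))) →g
          disjointUnionGraph (fun _ : κ => (⊤ : SimpleGraph (Fin ((k + 1) * B)))), Bijective f :=
        (exists_bijective_hom_iff_exists_sum_fiber_eq fun i => Nat.add_pos_left (hpos i) B).symm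
    _ ↔ _ := exists_congr fun f =>
        (Fintype.bijective_iff_surjective_and_card f).trans (and_iff_left hvertices)

end EqualSums

/-- Let `A = {a₁, …, a_n}` be an `(m,B)`-positive multiset. Set
`pᵢ = aᵢ + B` and `q = 4B`. Let `G` be the disjoint union of complete graphs
`K_{p₁} + … + K_{p_n}` and `H` the disjoint union of `m` copies of `K_q`. Then `A` has a
3-partition if and only if there exists a surjective homomorphism from `G` to `H`. -/
theorem threePartition_iff_surjective_hom_unions_of_complete_graphs
    (n m B : ℕ) (a : Fin n → ℕ) (hn : n = 3 * m) (hsum : ∑ i, a i = m * B)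
    (hpos : ∀ i, 0 < a i) :
    HasThreePartition n m B a ↔
      ∃ f : disjointUnionGraph (fun i : Fin n => (⊤ : SimpleGraph (Fin (a i + B)))) →g
            disjointUnionGraph (fun _ : Fin m => (⊤ : SimpleGraph (Fin (4 * B)))),
        Function.Surjective f :=
  threePartition_iff_surjective_hom_unions_of_complete_graphs_general
    (by simpa only [Fintype.card_fin] using hn) (by simpa only [Fintype.card_fin] using hsum) hpos
end

section
/- Let A = {a_1, …, a_n} be an (m,B)-positive multiset of integers. Set p_i = a_i + B for i = 1, …, n and q = 4B. Let G be the split graph whose vertex set consists of a clique of size 4mB partitioned into blocks U_1, …, U_n with |U_i| = p_i, together with independent vertices v_1, …, v_n where each v_i is adjacent exactly to the vertices of U_i. Let H be the split graph whose vertex set consists of a clique of size 4mB partitioned into blocks X^{(1)}, …, X^{(m)} with |X^{(j)}| = q, together with independent vertices y_j^{(1)}, y_j^{(2)}, y_j^{(3)} for j = 1, …, m, where each y_j^{(t)} is adjacent exactly to the vertices of X^{(j)}. Then A has a 3-partition if and only if there exists a surjective homomorphism from G to H. -/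
/-- The split graph whose vertex set is a clique `Σ i, Fin (p i)` (partitioned into
blocks `Uᵢ = {i} × Fin (p i)` of size `p i`) together with independent vertices
`vᵢ` (`i : Fin n`), where `vᵢ` is adjacent exactly to the vertices of `Uᵢ`. -/
def splitGuest (n : ℕ) (p : Fin n → ℕ) :
    SimpleGraph ((Σ i : Fin n, Fin (p i)) ⊕ Fin n) :=
  SimpleGraph.fromRel
    (fun x y =>
      (∃ c d, x = Sum.inl c ∧ y = Sum.inl d) ∨
      (∃ (i : Fin n) (u : Fin (p i)), x = Sum.inr i ∧ y = Sum.inl ⟨i, u⟩))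

/-- The split graph whose vertex set is a clique `Fin m × Fin q` (partitioned into blocks
`X⁽ʲ⁾ = {j} × Fin q` of size `q`) together with independent vertices `y_j⁽¹⁾, y_j⁽²⁾,
y_j⁽³⁾` for each `j : Fin m`, where `y_j⁽ᵗ⁾` is adjacent exactly to the vertices of
`X⁽ʲ⁾`. -/
def splitHost (m q : ℕ) : SimpleGraph ((Fin m × Fin q) ⊕ (Fin m × Fin 3)) :=
  SimpleGraph.fromRel
    (fun x y =>
      (∃ c d, x = Sum.inl c ∧ y = Sum.inl d) ∨
      (∃ (j : Fin m) (t : Fin 3) (u : Fin q), x = Sum.inr (j, t) ∧ y = Sum.inl (j, u)))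

/-!
A surjective homomorphism between graphs with equally many vertices is bijective, hence does not
decrease degrees. A clique vertex of `G` has degree `p₁ + … + p_n = m q`, which for `m ≥ 2` and
`q > 0` exceeds the degree `q` of each `y_j⁽ᵗ⁾`; so the clique of `G` is mapped bijectively onto the
clique of `H`, and the vertices `vᵢ` onto the vertices `y_j⁽ᵗ⁾`. If `vᵢ` goes to `y_j⁽ᵗ⁾`, then `Uᵢ`
goes into `X⁽ʲ⁾`, and counting the vertices over each `j` shows that three of the `pᵢ` sum to `q`.
Since all classes have size three, adding `B` to every `aᵢ` adds `3 B` to every class sum. For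
`m ≤ 1` there is always a 3-partition.
-/

section Fibers

variable {α β γ δ ι : Type*}

theorem forall_card_fiber_eq_iff_exists_equiv_prod [Fintype α] [DecidableEq ι]
    (π : α → ι) (k : ℕ) :
    (∀ j, (Finset.univ.filter (fun x => π x = j)).card = k) ↔
      ∃ e : α ≃ ι × Fin k, ∀ x, (e x).1 = π x := by
  simp only [← Fintype.card_subtype]
  constructor
  · intro hcard
    let e (j : ι) : {x // π x = j} ≃ Fin k := Fintype.equivFinOfCardEq (hcard j)
    exact ⟨((Equiv.sigmaFiberEquiv π).symm.trans (Equiv.sigmaCongrRight e)).trans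
      (Equiv.sigmaEquivProd ι (Fin k)), fun _ => rfl⟩
  · rintro ⟨e, he⟩ j
    let fiberEquiv : {x // π x = j} ≃ Fin k :=
      (e.subtypeEquiv fun x => by rw [he]).trans
        (Equiv.prodSubtypeFstEquivSubtypeProd.trans (Equiv.uniqueProd (Fin k) {i // i = j}))
    simpa using Fintype.card_congr fiberEquiv

theorem card_filter_sigma_fst {κ : ι → Type*} [Fintype ι] [∀ i, Fintype (κ i)]
    (P : ι → Prop) [DecidablePred P] :
    (Finset.univ.filter (fun x : Σ i, κ i => P x.1)).card =
      ∑ i ∈ Finset.univ.filter P, Fintype.card (κ i) := by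
  have hfilter : Finset.univ.filter (fun x : Σ i, κ i => P x.1) =
      (Finset.univ.filter P).sigma fun _ => Finset.univ := by
    ext x
    simp
  rw [hfilter, Finset.card_sigma]
  rfl

theorem exists_equiv_sumMap_eq_of_bijective [Fintype α] [Fintype γ] {f : α ⊕ β → γ ⊕ δ}
    (hf : Function.Bijective f) (hcard : Fintype.card α = Fintype.card γ)
    (hinl : ∀ a, ∃ c, f (Sum.inl a) = Sum.inl c) :
    ∃ (g : α ≃ γ) (h : β ≃ δ), f = Sum.map g h := by
  choose g hg using hinl
  have hg_inj : Function.Injective g := fun a a' haa' =>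
    Sum.inl_injective (hf.injective (by rw [hg, hg, haa']))
  have hg_bij : Function.Bijective g :=
    (Fintype.bijective_iff_injective_and_card g).2 ⟨hg_inj, hcard⟩
  have hinr (b : β) : ∃ d, f (Sum.inr b) = Sum.inr d := by
    rcases hb : f (Sum.inr b) with c | d
    · obtain ⟨a, rfl⟩ := hg_bij.surjective c
      exact absurd (hf.injective (hb.trans (hg a).symm)) Sum.inr_ne_inl
    · exact ⟨d, rfl⟩
  choose h hh using hinr
  have hmap : f = Sum.map g h := funext fun x => by cases x <;> simp [hg, hh]
  have hh_bij : Function.Bijective h := (Sum.map_bijective.1 (hmap ▸ hf)).2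
  exact ⟨.ofBijective g hg_bij, .ofBijective h hh_bij, hmap⟩

end Fibers

section SplitGraphs

variable {n m q : ℕ} {p : Fin n → ℕ}

theorem splitGuest_adj_inl_inl {c d : Σ i, Fin (p i)} :
    (splitGuest n p).Adj (Sum.inl c) (Sum.inl d) ↔ c ≠ d := by
  simp [splitGuest, -Sigma.exists]

theorem splitGuest_adj_inl_inr {c : Σ i, Fin (p i)} {i : Fin n} :
    (splitGuest n p).Adj (Sum.inl c) (Sum.inr i) ↔ c.1 = i := by
  constructor
  · simp +contextual [splitGuest]
  · rintro rfl
    simpa [splitGuest] using ⟨c.2, rfl⟩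

theorem splitGuest_not_adj_inr_inr {i k : Fin n} :
    ¬(splitGuest n p).Adj (Sum.inr i) (Sum.inr k) := by
  simp [splitGuest]

theorem splitHost_adj_inl_inl {x z : Fin m × Fin q} :
    (splitHost m q).Adj (Sum.inl x) (Sum.inl z) ↔ x ≠ z := by
  simp [splitHost, -Prod.exists]

theorem splitHost_adj_inl_inr {x : Fin m × Fin q} {y : Fin m × Fin 3} :
    (splitHost m q).Adj (Sum.inl x) (Sum.inr y) ↔ x.1 = y.1 := by
  obtain ⟨j, u⟩ := x
  obtain ⟨k, t⟩ := y
  simp [splitHost, eq_comm]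

theorem splitHost_not_adj_inr_inr {y z : Fin m × Fin 3} :
    ¬(splitHost m q).Adj (Sum.inr y) (Sum.inr z) := by
  simp [splitHost]

theorem degree_splitGuest_inl (c : Σ i, Fin (p i))
    [Fintype ((splitGuest n p).neighborSet (Sum.inl c))] :
    (splitGuest n p).degree (Sum.inl c) = ∑ i, p i := by
  have hnbr : (splitGuest n p).neighborSet (Sum.inl c) =
      insert (Sum.inr c.1) (Sum.inl '' {c}ᶜ) := by
    ext (d | i) <;> simp [splitGuest_adj_inl_inl, splitGuest_adj_inl_inr, eq_comm]
  have hpos : 0 < Nat.card (Σ i, Fin (p i)) := Nat.card_pos_iff.2 ⟨⟨c⟩, inferInstance⟩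
  rw [← SimpleGraph.card_neighborSet_eq_degree, Set.fintypeCard_eq_ncard, hnbr,
    Set.ncard_insert_of_notMem (by simp), Set.ncard_image_of_injective _ Sum.inl_injective,
    Set.ncard_compl, Set.ncard_singleton, Nat.sub_add_cancel hpos]
  simp

theorem degree_splitHost_inr (y : Fin m × Fin 3)
    [Fintype ((splitHost m q).neighborSet (Sum.inr y))] :
    (splitHost m q).degree (Sum.inr y) = q := by
  have hnbr : (splitHost m q).neighborSet (Sum.inr y) =
      Set.range (Sum.inl ∘ Prod.mk y.1) := by
    ext (x | z)
    · simp [SimpleGraph.adj_comm _ (Sum.inr y), splitHost_adj_inl_inr, Prod.ext_iff, eq_comm]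
    · simp [splitHost_not_adj_inr_inr]
  rw [← SimpleGraph.card_neighborSet_eq_degree, Set.fintypeCard_eq_ncard, hnbr,
    ← Set.image_univ, Set.ncard_image_of_injective _
      (Sum.inl_injective.comp (Prod.mk_right_injective y.1)), Set.ncard_univ, Nat.card_fin]

theorem sum_le_of_injective_hom_inl_eq_inr (f : splitGuest n p →g splitHost m q)
    (hf : Function.Injective f) {c : Σ i, Fin (p i)} {y : Fin m × Fin 3}
    (hfc : f (Sum.inl c) = Sum.inr y) : ∑ i, p i ≤ q := by
  classical
  calc ∑ i, p i = (splitGuest n p).degree (Sum.inl c) := (degree_splitGuest_inl c).symm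
    _ ≤ (splitHost m q).degree (f (Sum.inl c)) := (f.toCopy hf).degree_le (Sum.inl c)
    _ = q := by rw [hfc, degree_splitHost_inr]

/-- The homomorphism from `G` to `H` that acts as `g` on the clique and as `h` on the independent
vertices; 3-partitions give rise to homomorphisms of this form. -/
def splitHom (g : (Σ i, Fin (p i)) → Fin m × Fin q) (h : Fin n → Fin m × Fin 3)
    (hg : Function.Injective g) (hgh : ∀ c, (g c).1 = (h c.1).1) :
    splitGuest n p →g splitHost m q where
  toFun := Sum.map g h
  map_rel' := by
    rintro (c | i) (d | k) hadj
    · exact splitHost_adj_inl_inl.2 (hg.ne (splitGuest_adj_inl_inl.1 hadj))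
    · obtain rfl := splitGuest_adj_inl_inr.1 hadj
      exact splitHost_adj_inl_inr.2 (hgh c)
    · obtain rfl := splitGuest_adj_inl_inr.1 hadj.symm
      exact (splitHost_adj_inl_inr.2 (hgh d)).symm
    · exact absurd hadj splitGuest_not_adj_inr_inr

theorem exists_equivs_of_surjective_hom (hn : n = 3 * m) (hsum : ∑ i, p i = m * q) (hm : 2 ≤ m)
    (f : splitGuest n p →g splitHost m q) (hf : Function.Surjective f) :
    ∃ (g : (Σ i, Fin (p i)) ≃ Fin m × Fin q) (h : Fin n ≃ Fin m × Fin 3),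
      ∀ c, (g c).1 = (h c.1).1 := by
  have hcard_clique : Fintype.card (Σ i, Fin (p i)) = Fintype.card (Fin m × Fin q) := by
    simp [hsum]
  have hf_bij : Function.Bijective f :=
    (Fintype.bijective_iff_surjective_and_card f).2 ⟨hf, by simp [hsum, hn, mul_comm]⟩
  have hclique (c : Σ i, Fin (p i)) : ∃ x, f (Sum.inl c) = Sum.inl x := by
    rcases hfc : f (Sum.inl c) with x | y
    · exact ⟨x, rfl⟩
    · have hle := sum_le_of_injective_hom_inl_eq_inr f hf_bij.injective hfc
      have hpos : 0 < ∑ i, p i := by simpa using Fintype.card_pos_iff.2 ⟨c⟩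
      have hmul : 2 * q ≤ m * q := Nat.mul_le_mul_right q hm
      omega
  obtain ⟨g, h, hfgh⟩ := exists_equiv_sumMap_eq_of_bijective hf_bij hcard_clique hclique
  refine ⟨g, h, fun c => splitHost_adj_inl_inr.1 ?_⟩
  simpa [hfgh] using f.map_adj (splitGuest_adj_inl_inr.2 (rfl : c.1 = c.1))

end SplitGraphs

section ThreePartition

variable {n m q : ℕ} {p : Fin n → ℕ}

theorem hasThreePartition_iff_exists_equivs :
    HasThreePartition n m q p ↔
      ∃ (g : (Σ i, Fin (p i)) ≃ Fin m × Fin q) (h : Fin n ≃ Fin m × Fin 3),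
        ∀ c, (g c).1 = (h c.1).1 := by
  have hblock (part : Fin n → Fin m) (j : Fin m) :
      (Finset.univ.filter (fun c : Σ i, Fin (p i) => part c.1 = j)).card =
        ∑ i ∈ Finset.univ.filter (fun i => part i = j), p i := by
    simpa using card_filter_sigma_fst (κ := fun i => Fin (p i)) (fun i => part i = j)
  have hfibers (part : Fin n → Fin m) :
      (∀ j, (Finset.univ.filter (fun i => part i = j)).card = 3 ∧
        ∑ i ∈ Finset.univ.filter (fun i => part i = j), p i = q) ↔
      (∃ h : Fin n ≃ Fin m × Fin 3, ∀ i, (h i).1 = part i) ∧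
        ∃ g : (Σ i, Fin (p i)) ≃ Fin m × Fin q, ∀ c, (g c).1 = part c.1 := by
    simp only [forall_and, ← forall_card_fiber_eq_iff_exists_equiv_prod, hblock]
  simp only [HasThreePartition, hfibers]
  constructor
  · rintro ⟨part, ⟨h, hh⟩, g, hg⟩
    exact ⟨g, h, fun c => (hg c).trans (hh c.1).symm⟩
  · rintro ⟨g, h, hgh⟩
    exact ⟨fun i => (h i).1, ⟨h, fun _ => rfl⟩, g, hgh⟩

theorem hasThreePartition_of_le_one (hn : n = 3 * m) (hsum : ∑ i, p i = m * q) (hm : m ≤ 1) :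
    HasThreePartition n m q p := by
  interval_cases m
  · subst hn
    exact ⟨Fin.elim0, fun j => j.elim0⟩
  · exact ⟨fun _ => 0, fun j => by simp [Subsingleton.elim 0 j, hn, hsum]⟩

theorem hasThreePartition_add_const_iff (c : ℕ) :
    HasThreePartition n m (q + 3 * c) (fun i => p i + c) ↔ HasThreePartition n m q p := by
  refine exists_congr fun part => forall_congr' fun j => and_congr_right fun hcard => ?_
  rw [Finset.sum_add_distrib, Finset.sum_const, hcard, smul_eq_mul, Nat.add_right_cancel_iff]

end ThreePartition

theorem threePartition_iff_surjective_hom_split_graphs_general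
    (n m q : ℕ) (p : Fin n → ℕ) (hn : n = 3 * m) (hsum : ∑ i, p i = m * q) :
    HasThreePartition n m q p ↔
      ∃ f : splitGuest n p →g splitHost m q, Function.Surjective f := by
  constructor
  · intro hpart
    obtain ⟨g, h, hgh⟩ := hasThreePartition_iff_exists_equivs.1 hpart
    exact ⟨splitHom g h g.injective hgh, g.surjective.sumMap h.surjective⟩
  · rintro ⟨f, hf⟩
    rcases le_or_gt m 1 with hm | hm
    · exact hasThreePartition_of_le_one hn hsum hm
    · exact hasThreePartition_iff_exists_equivs.2 (exists_equivs_of_surjective_hom hn hsum hm f hf)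

/-- Let `A = {a₁, …, a_n}` be an `(m,B)`-positive multiset. Set
`pᵢ = aᵢ + B` and `q = 4B`. Let `G` be the split graph with a clique of size
`4mB = p₁ + … + p_n` split into blocks `U₁, …, U_n` with `|Uᵢ| = pᵢ`, plus independent
vertices `v₁, …, v_n` with `vᵢ` adjacent exactly to `Uᵢ`; let `H` be the split graph
with a clique of size `4mB = mq` split into blocks `X⁽¹⁾, …, X⁽ᵐ⁾` of size `q`, plus
independent vertices `y_j⁽¹⁾, y_j⁽²⁾, y_j⁽³⁾` adjacent exactly to `X⁽ʲ⁾`. Then `A` has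
a 3-partition if and only if there exists a surjective homomorphism from `G` to `H`. -/
theorem threePartition_iff_surjective_hom_split_graphs
    (n m B : ℕ) (a : Fin n → ℕ) (hn : n = 3 * m) (hsum : ∑ i, a i = m * B)
    (hpos : ∀ i, 0 < a i) :
    HasThreePartition n m B a ↔
      ∃ f : splitGuest n (fun i => a i + B) →g splitHost m (4 * B),
        Function.Surjective f := by
  have hsum_add : ∑ i, (a i + B) = m * (4 * B) := by
    rw [Finset.sum_add_distrib, hsum, Finset.sum_const, Finset.card_fin, hn, smul_eq_mul]
    ring
  rw [← hasThreePartition_add_const_iff B, show B + 3 * B = 4 * B by ring]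
  exact threePartition_iff_surjective_hom_split_graphs_general n m (4 * B) _ hn hsum_add
end
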